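/- For all real numbers u, q with q > 1 and 0 < u < 1, M_{(u,q)} is a probability measure on the set of all partitions of all nonnegative integers: M_{(u,q)}(λ) > 0 for every partition λ, and the sum of M_{(u,q)}(λ) over all partitions λ equals 1. -/

import Mathlib

/-!
Write `x = 1 / q` and let `λ'_1 ≥ λ'_2 ≥ ⋯` be the column lengths of `λ`. Since
`|GL(m,q)| = q^(m²) (x; x)_m`, the unnormalised weight of `λ` is
`∏_i u^(λ'_i) x^(λ'_i²) / (x; x)_(λ'_i - λ'_(i+1))`, so removing a first column of height `a` from a
partition and leaving `b` parts divides the weight by `u^a x^(a²) / (x; x)_(a-b)`. Hence the total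
weight `F_a` of the partitions with `a` parts satisfies
`F_a = u^a x^(a²) ∑_{b ≤ a} F_b / (x; x)_(a-b)` (`partSum_rec`). The explicit sequence
`T_a = u^a x^(a²) / ((x; x)_a (u x; x)_a)` satisfies the same recursion, which is a finite form of
Durfee's square identity (`durfee`, `colWeight_rec`).

The recursion bounds by `T_a` the contribution of the partitions with parts at most `n`, by
induction on `n` (`partSum_bounded_le`), so `F_a ≤ T_a` is finite. The recursion is triangular with
diagonal coefficient `u^a x^(a²) < 1` for `a > 0`, and `F_0 = T_0`, so `F_a = T_a` (`partSum_eq`).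
Letting `a → ∞` in the finite Durfee identity gives `∑_a T_a = 1 / (u x; x)_∞`
(`colWeight_hasSum`), and the factor `(u x; x)_∞` of the measure normalises this to `1`.

Partitions are encoded by their multiplicity sequences `ℕ →₀ ℕ`, the entry `i` being the
multiplicity of the part `i + 1`; removing the first column is then the shift of the sequence.
-/


open scoped BigOperators

/-- The "order of `GL(m,q)`" for a real parameter `q`:
`|GL(m,q)| = q^(m(m-1)/2) * ∏_{j=1}^m (q^j - 1)`. -/
noncomputable def glOrder (q : ℝ) (m : ℕ) : ℝ :=
  q ^ (m * (m - 1) / 2) * ∏ j ∈ Finset.range m, (q ^ (j + 1) - 1)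

/-- The measure `M_{(u,q)}` on the set of all partitions of all nonnegative integers. -/
noncomputable def measureM (u q : ℝ) (lam : Σ n : ℕ, Nat.Partition n) : ℝ :=
  (∏' r : ℕ, (1 - u / q ^ (r + 1))) * u ^ lam.1 /
    (q ^ (2 * ∑ i ∈ Finset.range (lam.1 + 1), ∑ h ∈ Finset.range i,
            h * lam.2.parts.count h * lam.2.parts.count i
        + ∑ i ∈ Finset.range (lam.1 + 1), (i - 1) * lam.2.parts.count i ^ 2) *
      ∏ i ∈ Finset.range (lam.1 + 1), glOrder q (lam.2.parts.count i))

section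

open Finset Filter Topology
open scoped ENNReal

/-! ### q-Pochhammer products and the finite Durfee identity -/

/-- The finite q-Pochhammer symbol `(y x; x)_n = ∏_{j=1}^n (1 - y x^j)`. In particular
`(x; x)_n = poch 1 x n` and `(u x; x)_n = poch u x n`. -/
noncomputable def poch (y x : ℝ) (n : ℕ) : ℝ := ∏ j ∈ range n, (1 - y * x ^ (j + 1))

lemma poch_zero (y x : ℝ) : poch y x 0 = 1 := by simp [poch]

lemma poch_succ (y x : ℝ) (n : ℕ) : poch y x (n + 1) = poch y x n * (1 - y * x ^ (n + 1)) := by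
  simp [poch, prod_range_succ]

lemma poch_succ' (y x : ℝ) (n : ℕ) : poch y x (n + 1) = (1 - y * x) * poch (y * x) x n := by
  simp only [poch, prod_range_succ']
  rw [mul_comm]
  congr 1
  · simp
  · exact prod_congr rfl fun j _ => by ring

lemma factor_pos {y x : ℝ} (hx0 : 0 < x) (hx1 : x < 1) (hy1 : y ≤ 1) (j : ℕ) :
    0 < 1 - y * x ^ (j + 1) := by
  have h1 : x ^ (j + 1) < 1 := pow_lt_one₀ hx0.le hx1 (by simp)
  have h2 : 0 < x ^ (j + 1) := by positivity
  nlinarith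

lemma poch_pos {y x : ℝ} (hx0 : 0 < x) (hx1 : x < 1) (hy1 : y ≤ 1) (n : ℕ) : 0 < poch y x n :=
  prod_pos fun j _ => factor_pos hx0 hx1 hy1 j

/-- The total weight `u^a x^(a²) / ((x; x)_a (u x; x)_a)` of the partitions with exactly `a` parts,
before the normalisation by `(u x; x)_∞`. -/
noncomputable def colWeight (u x : ℝ) (a : ℕ) : ℝ :=
  u ^ a * x ^ (a ^ 2) / (poch 1 x a * poch u x a)

lemma colWeight_pos {u x : ℝ} (hx0 : 0 < x) (hx1 : x < 1) (hu0 : 0 < u) (hu1 : u ≤ 1) (a : ℕ) :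
    0 < colWeight u x a := by
  have h1 := poch_pos hx0 hx1 le_rfl a
  have h2 := poch_pos hx0 hx1 hu1 a
  unfold colWeight
  positivity

/-- Finite Durfee-square identity (a case of q-Vandermonde). With `S(a, u)` for the left-hand side,
splitting `1 - x^(a+1) = (1 - x^k) + x^k (1 - x^b)` for `k + b = a + 1` gives
`(1 - x^(a+1)) S(a+1, u) = S(a, u) + u x^(a+1) / (1 - u x) * S(a, u x)`. -/
lemma durfee {x : ℝ} (hx0 : 0 < x) (hx1 : x < 1) (a : ℕ) : ∀ u : ℝ, u ≤ 1 → 0 < u →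
    ∑ p ∈ antidiagonal a, colWeight u x p.2 / poch 1 x p.1 = 1 / (poch 1 x a * poch u x a) := by
  induction a with
  | zero => intro u _ _; simp [colWeight, poch_zero]
  | succ a ih =>
    intro u hu hu0
    have hux : u * x ≤ 1 := by nlinarith
    have e1 := ih u hu hu0
    have e2 := ih (u * x) hux (by positivity)
    have hP := fun n => (poch_pos hx0 hx1 le_rfl n).ne'
    have hU := fun n => (poch_pos hx0 hx1 hu n).ne'
    have hV := fun n => (poch_pos hx0 hx1 hux n).ne'
    have f1 := fun j => (factor_pos hx0 hx1 (le_refl (1 : ℝ)) j).ne'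
    simp only [one_mul] at f1
    have f2 := fun j => (factor_pos hx0 hx1 hu j).ne'
    have f3 := (factor_pos hx0 hx1 hu 0).ne'
    simp only [zero_add, pow_one] at f3
    have hsplit : (1 - x ^ (a + 1)) *
          ∑ p ∈ antidiagonal (a + 1), colWeight u x p.2 / poch 1 x p.1
        = ∑ p ∈ antidiagonal (a + 1), (1 - x ^ p.1) * (colWeight u x p.2 / poch 1 x p.1)
        + ∑ p ∈ antidiagonal (a + 1),
            x ^ p.1 * (1 - x ^ p.2) * (colWeight u x p.2 / poch 1 x p.1) := by
      rw [mul_sum, ← sum_add_distrib]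
      refine sum_congr rfl fun p hp => ?_
      rw [← mem_antidiagonal.1 hp]
      ring
    have s1 : ∑ p ∈ antidiagonal (a + 1), (1 - x ^ p.1) * (colWeight u x p.2 / poch 1 x p.1)
        = ∑ p ∈ antidiagonal a, colWeight u x p.2 / poch 1 x p.1 := by
      rw [Nat.sum_antidiagonal_succ]
      simp only [pow_zero, sub_self, zero_mul, zero_add]
      refine sum_congr rfl fun p _ => ?_
      rw [poch_succ, one_mul]
      have := hP p.1
      have := f1 p.1
      field_simp
    have s2 : ∑ p ∈ antidiagonal (a + 1),
          x ^ p.1 * (1 - x ^ p.2) * (colWeight u x p.2 / poch 1 x p.1)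
        = u * x ^ (a + 1) / (1 - u * x) *
          ∑ p ∈ antidiagonal a, colWeight (u * x) x p.2 / poch 1 x p.1 := by
      rw [Nat.sum_antidiagonal_succ', mul_sum]
      simp only [pow_zero, sub_self, zero_mul, zero_add, mul_zero]
      refine sum_congr rfl fun p hp => ?_
      rw [← mem_antidiagonal.1 hp]
      unfold colWeight
      rw [poch_succ 1, poch_succ' u, one_mul]
      have := hP p.1
      have := hP p.2
      have := hV p.2
      have := f1 p.2
      field_simp
      ring
    rw [s1, s2, e1, e2] at hsplit
    have hfin : (1 - x ^ (a + 1)) * (1 / (poch 1 x (a + 1) * poch u x (a + 1)))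
        = 1 / (poch 1 x a * poch u x a) +
          u * x ^ (a + 1) / (1 - u * x) * (1 / (poch 1 x a * poch (u * x) x a)) := by
      have h4 : u * x ^ (a + 1) / (1 - u * x) * (1 / (poch 1 x a * poch (u * x) x a))
          = u * x ^ (a + 1) / (poch 1 x a * poch u x (a + 1)) := by
        rw [poch_succ' u]
        have := hP a
        have := hV a
        field_simp
      rw [h4, poch_succ, poch_succ, one_mul]
      have := hP a
      have := hU a
      have := f1 a
      have := f2 a
      generalize u * x ^ (a + 1) = t at *
      field_simp
      ring
    exact mul_left_cancel₀ (f1 a) (hsplit.trans hfin.symm)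

/-- The fixed-point equation satisfied by `colWeight` under removal of the first column. -/
lemma colWeight_rec {u x : ℝ} (hx0 : 0 < x) (hx1 : x < 1) (hu0 : 0 < u) (hu1 : u ≤ 1) (a : ℕ) :
    ∑ p ∈ antidiagonal a, u ^ a * x ^ (a ^ 2) / poch 1 x p.1 * colWeight u x p.2
      = colWeight u x a := by
  have h := durfee hx0 hx1 a u hu1 hu0
  rw [colWeight, ← mul_one_div (u ^ a * x ^ (a ^ 2)), ← h, mul_sum]
  exact sum_congr rfl fun p _ => by ring

/-! ### The infinite Durfee identity -/

lemma summable_factor {x : ℝ} (hx0 : 0 < x) (hx1 : x < 1) (y : ℝ) :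
    Summable fun j : ℕ => -(y * x ^ (j + 1)) := by
  refine Summable.neg (Summable.mul_left _ ?_)
  exact (summable_nat_add_iff 1).2 (summable_geometric_of_lt_one hx0.le hx1)

/-- The infinite product `(y x; x)_∞`. -/
noncomputable def pochInf (y x : ℝ) : ℝ := ∏' j : ℕ, (1 - y * x ^ (j + 1))

lemma pochInf_pos {y x : ℝ} (hx0 : 0 < x) (hx1 : x < 1) (hy1 : y ≤ 1) : 0 < pochInf y x := by
  have h := Real.summable_log_one_add_of_summable (summable_factor hx0 hx1 y)
  simp only [← sub_eq_add_neg] at h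
  rw [pochInf, ← Real.rexp_tsum_eq_tprod (factor_pos hx0 hx1 hy1) h]
  exact Real.exp_pos _

lemma poch_tendsto {y x : ℝ} (hx0 : 0 < x) (hx1 : x < 1) :
    Tendsto (poch y x) atTop (𝓝 (pochInf y x)) := by
  have h := Real.multipliable_one_add_of_summable (summable_factor hx0 hx1 y)
  simp only [← sub_eq_add_neg] at h
  exact h.tendsto_prod_tprod_nat

lemma poch_antitone {y x : ℝ} (hx0 : 0 < x) (hx1 : x < 1) (hy0 : 0 ≤ y) (hy1 : y ≤ 1) :
    Antitone (poch y x) := by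
  refine antitone_nat_of_succ_le fun n => ?_
  rw [poch_succ]
  have h := poch_pos hx0 hx1 hy1 n
  have : 0 ≤ y * x ^ (n + 1) := by positivity
  nlinarith

lemma pochInf_le {y x : ℝ} (hx0 : 0 < x) (hx1 : x < 1) (hy0 : 0 ≤ y) (hy1 : y ≤ 1) (n : ℕ) :
    pochInf y x ≤ poch y x n :=
  (poch_antitone hx0 hx1 hy0 hy1).le_of_tendsto (poch_tendsto hx0 hx1) n

/-- The Durfee-square identity `∑_a u^a x^(a²) / ((x; x)_a (u x; x)_a) = 1 / (u x; x)_∞`, obtained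
from the finite one by dominated convergence. -/
lemma colWeight_hasSum {u x : ℝ} (hx0 : 0 < x) (hx1 : x < 1) (hu0 : 0 < u) (hu1 : u < 1) :
    HasSum (colWeight u x) (1 / pochInf u x) := by
  have hA := pochInf_pos hx0 hx1 (le_refl (1 : ℝ))
  have hB := pochInf_pos hx0 hx1 hu1.le
  have hsum : Summable (colWeight u x) := by
    refine Summable.of_nonneg_of_le (fun a => (colWeight_pos hx0 hx1 hu0 hu1.le a).le)
      (f := fun a => u ^ a * (1 / (pochInf 1 x * pochInf u x))) (fun a => ?_)
      ((summable_geometric_of_lt_one hu0.le hu1).mul_right _)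
    have h1 := pochInf_le hx0 hx1 zero_le_one (le_refl (1 : ℝ)) a
    have h2 := pochInf_le hx0 hx1 hu0.le hu1.le a
    have h3 : x ^ (a ^ 2) ≤ 1 := pow_le_one₀ hx0.le hx1.le
    rw [colWeight, mul_one_div]
    have h4 := poch_pos hx0 hx1 (le_refl (1 : ℝ)) a
    gcongr
    exact mul_le_of_le_one_right (by positivity) h3
  have hlim : Tendsto (fun a => ∑' b, if b ≤ a then
      colWeight u x b * (poch 1 x a / poch 1 x (a - b)) else 0) atTop
      (𝓝 (∑' b, colWeight u x b)) := by
    refine tendsto_tsum_of_dominated_convergence hsum (fun b => ?_)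
      (Eventually.of_forall fun a b => ?_)
    · have h1 : Tendsto (fun a => colWeight u x b * (poch 1 x a / poch 1 x (a - b))) atTop
          (𝓝 (colWeight u x b * (pochInf 1 x / pochInf 1 x))) :=
        ((poch_tendsto hx0 hx1).div ((poch_tendsto hx0 hx1).comp (tendsto_sub_atTop_nat b))
          hA.ne').const_mul _
      rw [div_self hA.ne', mul_one] at h1
      refine h1.congr' ?_
      filter_upwards [eventually_ge_atTop b] with a ha
      rw [if_pos ha]
    · have hc := colWeight_pos hx0 hx1 hu0 hu1.le b
      split_ifs with hab
      · have hp := poch_pos hx0 hx1 (le_refl (1 : ℝ)) a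
        have hp' := poch_pos hx0 hx1 (le_refl (1 : ℝ)) (a - b)
        rw [Real.norm_of_nonneg (by positivity)]
        refine mul_le_of_le_one_right hc.le ((div_le_one hp').2 ?_)
        exact poch_antitone hx0 hx1 zero_le_one le_rfl (Nat.sub_le a b)
      · simpa using hc.le
  have heq : ∀ a, (∑' b, if b ≤ a then
      colWeight u x b * (poch 1 x a / poch 1 x (a - b)) else 0) = 1 / poch u x a := by
    intro a
    rw [tsum_eq_sum (s := range (a + 1)) (fun b hb => if_neg (by simpa using hb))]
    have hp := (poch_pos hx0 hx1 (le_refl (1 : ℝ)) a).ne'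
    have h := durfee hx0 hx1 a u hu1.le hu0
    rw [← Nat.sum_antidiagonal_swap, Nat.sum_antidiagonal_eq_sum_range_succ_mk] at h
    have h5 : 1 / poch u x a = poch 1 x a * (1 / (poch 1 x a * poch u x a)) := by
      have := (poch_pos hx0 hx1 hu1.le a).ne'
      field_simp
    rw [h5, ← h, mul_sum]
    refine sum_congr rfl fun b hb => ?_
    rw [if_pos (by simpa [Nat.lt_succ_iff] using hb)]
    simp only [Prod.swap_prod_mk]
    ring
  simp only [heq] at hlim
  have hlim2 : Tendsto (fun a => 1 / poch u x a) atTop (𝓝 (1 / pochInf u x)) :=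
    tendsto_const_nhds.div (poch_tendsto hx0 hx1) hB.ne'
  rw [← tendsto_nhds_unique hlim hlim2]
  exact hsum.hasSum

/-! ### Weights of multiplicity sequences -/

lemma glOrder_eq {q : ℝ} (hq : 1 < q) (k : ℕ) :
    glOrder q k = q ^ (k ^ 2) * poch 1 q⁻¹ k := by
  have hq0 : q ≠ 0 := by positivity
  induction k with
  | zero => simp [glOrder, poch]
  | succ k ih =>
    have h : glOrder q (k + 1) = glOrder q k * q ^ k * (q ^ (k + 1) - 1) := by
      unfold glOrder
      rw [prod_range_succ, Nat.triangle_succ, pow_add]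
      ring
    rw [h, ih, poch_succ, inv_pow]
    field_simp
    ring

lemma glOrder_pos {q : ℝ} (hq : 1 < q) (k : ℕ) : 0 < glOrder q k := by
  rw [glOrder_eq hq]
  have := poch_pos (inv_pos.2 (by positivity)) (inv_lt_one_of_one_lt₀ hq) (le_refl (1 : ℝ)) k
  positivity

/-- The exponent of `q` in the denominator of `M_{(u,q)}`, for the partition in which the part `i + 1`
occurs `m i` times for `i < L`. -/
def expo (L : ℕ) (m : ℕ → ℕ) : ℕ :=
  2 * ∑ i ∈ range L, ∑ h ∈ range i, (h + 1) * m h * m i + ∑ i ∈ range L, i * m i ^ 2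

/-- The unnormalised weight of the partition in which the part `i + 1` occurs `m i` times
for `i < L`. -/
noncomputable def wt (u q : ℝ) (L : ℕ) (m : ℕ → ℕ) : ℝ :=
  u ^ (∑ i ∈ range L, (i + 1) * m i) / (q ^ expo L m * ∏ i ∈ range L, glOrder q (m i))

lemma wt_pos {u q : ℝ} (hq : 1 < q) (hu : 0 < u) (L : ℕ) (m : ℕ → ℕ) : 0 < wt u q L m := by
  have := prod_pos fun i (_ : i ∈ range L) => glOrder_pos hq (m i)
  unfold wt
  positivity

lemma wt_stable (u q : ℝ) {L : ℕ} {m : ℕ → ℕ} (hm : ∀ i, L ≤ i → m i = 0) (d : ℕ) :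
    wt u q (L + d) m = wt u q L m := by
  induction d with
  | zero => rfl
  | succ d ih =>
    rw [← ih, ← add_assoc]
    have h0 : m (L + d) = 0 := hm _ (by lia)
    simp [wt, expo, sum_range_succ, prod_range_succ, h0, glOrder]

lemma wt_congr (u q : ℝ) {L L' : ℕ} {m : ℕ → ℕ} (hm : ∀ i, L ≤ i → m i = 0)
    (hm' : ∀ i, L' ≤ i → m i = 0) : wt u q L m = wt u q L' m := by
  rcases le_total L L' with h | h <;> obtain ⟨d, rfl⟩ := Nat.exists_eq_add_of_le h
  · exact (wt_stable u q hm d).symm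
  · exact wt_stable u q hm' d

/-- Removing the first column, of height `N = m 0 + ∑ i < L, m (i + 1)`, lowers the exponent
by `N² - (m 0)²`. -/
lemma expo_succ (L : ℕ) (m : ℕ → ℕ) :
    expo (L + 1) m + m 0 ^ 2
      = expo L (fun i => m (i + 1)) + (∑ i ∈ range (L + 1), m i) ^ 2 := by
  induction L with
  | zero => simp [expo]
  | succ L ih =>
    have h1 : expo (L + 1 + 1) m = expo (L + 1) m
        + 2 * ∑ h ∈ range (L + 1), (h + 1) * m h * m (L + 1) + (L + 1) * m (L + 1) ^ 2 := by
      rw [expo, sum_range_succ _ (L + 1), sum_range_succ _ (L + 1), expo]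
      ring
    have h2 : expo (L + 1) (fun i => m (i + 1)) = expo L (fun i => m (i + 1))
        + 2 * ∑ h ∈ range L, (h + 1) * m (h + 1) * m (L + 1) + L * m (L + 1) ^ 2 := by
      rw [expo, sum_range_succ _ L, sum_range_succ _ L, expo]
      ring
    have h3 : ∑ h ∈ range (L + 1), (h + 1) * m h * m (L + 1)
        = ∑ h ∈ range L, (h + 1) * m (h + 1) * m (L + 1)
          + (∑ i ∈ range (L + 1), m i) * m (L + 1) := by
      rw [sum_range_succ', sum_range_succ' m,
        add_mul (∑ i ∈ range L, m (i + 1)), ← add_assoc, sum_mul, ← sum_add_distrib]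
      congr 1
      · exact sum_congr rfl fun i _ => by ring
      · ring
    rw [h1, h2, h3, sum_range_succ _ (L + 1)]
    linear_combination ih

lemma wt_succ {u q : ℝ} (hq : 1 < q) (L : ℕ) (m : ℕ → ℕ) {N : ℕ}
    (hN : ∑ i ∈ range (L + 1), m i = N) :
    wt u q (L + 1) m = u ^ N * q⁻¹ ^ (N ^ 2) / poch 1 q⁻¹ (m 0)
      * wt u q L (fun i => m (i + 1)) := by
  have hq0 : q ≠ 0 := by positivity
  have he := expo_succ L m
  rw [hN] at he
  have hu : ∑ i ∈ range (L + 1), (i + 1) * m i = N + ∑ i ∈ range L, (i + 1) * m (i + 1) := by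
    rw [← hN, sum_range_succ', sum_range_succ', add_right_comm, ← sum_add_distrib]
    congr 1
    · exact sum_congr rfl fun i _ => by ring
    · ring
  have hgl := (prod_pos fun i (_ : i ∈ range L) => glOrder_pos hq (m (i + 1))).ne'
  have hp := (poch_pos (inv_pos.2 (by positivity)) (inv_lt_one_of_one_lt₀ hq)
    (le_refl (1 : ℝ)) (m 0)).ne'
  have he' : q ^ expo (L + 1) m * q ^ (m 0 ^ 2)
      = q ^ expo L (fun i => m (i + 1)) * q ^ (N ^ 2) := by
    rw [← pow_add, ← pow_add, he]
  have hd : q ^ expo (L + 1) m * ∏ i ∈ range (L + 1), glOrder q (m i)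
      = q ^ (N ^ 2) * poch 1 q⁻¹ (m 0) *
        (q ^ expo L (fun i => m (i + 1)) * ∏ i ∈ range L, glOrder q (m (i + 1))) := by
    rw [prod_range_succ', glOrder_eq hq (m 0)]
    linear_combination
      (∏ i ∈ range L, glOrder q (m (i + 1))) * poch 1 q⁻¹ (m 0) * he'
  rw [wt, hd, hu, wt, inv_pow, pow_add]
  field_simp

/-- The unnormalised weight of the partition in which the part `i + 1` occurs `f i` times. The
cut-off is any bound for the support (see `weight_eq`). -/
noncomputable def weight (u q : ℝ) (f : ℕ →₀ ℕ) : ℝ := wt u q (f.support.sup id + 1) f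

lemma weight_eq (u q : ℝ) {f : ℕ →₀ ℕ} {L : ℕ} (hL : ∀ i, L ≤ i → f i = 0) :
    weight u q f = wt u q L f := by
  refine wt_congr u q (fun i hi => ?_) hL
  by_contra h
  have : id i ≤ f.support.sup id := le_sup (Finsupp.mem_support_iff.2 h)
  simp only [id] at this
  lia

lemma weight_pos {u q : ℝ} (hq : 1 < q) (hu : 0 < u) (f : ℕ →₀ ℕ) : 0 < weight u q f :=
  wt_pos hq hu _ _

lemma exists_bound (f : ℕ →₀ ℕ) : ∃ L, ∀ i, L ≤ i → f i = 0 := by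
  refine ⟨f.support.sup id + 1, fun i hi => ?_⟩
  by_contra h
  have : id i ≤ f.support.sup id := le_sup (Finsupp.mem_support_iff.2 h)
  simp only [id] at this
  lia

lemma degree_eq_range {f : ℕ →₀ ℕ} {L : ℕ} (hL : ∀ i, L ≤ i → f i = 0) :
    f.degree = ∑ i ∈ range L, f i := by
  rw [Finsupp.degree_apply]
  refine sum_subset (fun i hi => ?_) fun i _ hi => by simpa using hi
  rw [mem_range]
  by_contra h
  exact Finsupp.mem_support_iff.1 hi (hL i (not_lt.1 h))

/-- A multiplicity sequence is its first entry together with the shifted sequence. In terms of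
partitions, the shifted sequence describes the partition with its first column removed. -/
noncomputable def consEquiv : ℕ × (ℕ →₀ ℕ) ≃ (ℕ →₀ ℕ) where
  toFun p := Finsupp.single 0 p.1 + p.2.embDomain ⟨Nat.succ, Nat.succ_injective⟩
  invFun f := (f 0, f.comapDomain Nat.succ Nat.succ_injective.injOn)
  left_inv p := by
    ext i
    · simp [Finsupp.embDomain_of_notMem_range]
    · simpa using Finsupp.embDomain_apply_self ⟨Nat.succ, Nat.succ_injective⟩ p.2 i
  right_inv f := by
    ext i
    cases i with
    | zero => simp [Finsupp.embDomain_of_notMem_range]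
    | succ i =>
      simpa using Finsupp.embDomain_apply_self ⟨Nat.succ, Nat.succ_injective⟩
        (f.comapDomain Nat.succ Nat.succ_injective.injOn) i

lemma consEquiv_zero (p : ℕ × (ℕ →₀ ℕ)) : consEquiv p 0 = p.1 :=
  congrArg Prod.fst (consEquiv.symm_apply_apply p)

lemma consEquiv_succ (p : ℕ × (ℕ →₀ ℕ)) (i : ℕ) : consEquiv p (i + 1) = p.2 i :=
  DFunLike.congr_fun (congrArg Prod.snd (consEquiv.symm_apply_apply p)) i

lemma consEquiv_bound {p : ℕ × (ℕ →₀ ℕ)} {L : ℕ} :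
    (∀ i, L + 1 ≤ i → consEquiv p i = 0) ↔ ∀ i, L ≤ i → p.2 i = 0 := by
  refine ⟨fun h i hi => ?_, fun h i hi => ?_⟩
  · rw [← consEquiv_succ]
    exact h _ (by lia)
  · obtain ⟨j, rfl⟩ : ∃ j, i = j + 1 := ⟨i - 1, by lia⟩
    rw [consEquiv_succ]
    exact h _ (by lia)

lemma degree_consEquiv (p : ℕ × (ℕ →₀ ℕ)) : (consEquiv p).degree = p.1 + p.2.degree := by
  obtain ⟨L, hL⟩ := exists_bound p.2
  rw [degree_eq_range (consEquiv_bound.2 hL), degree_eq_range hL, sum_range_succ', add_comm]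
  simp [consEquiv_zero, consEquiv_succ]

lemma weight_consEquiv {u q : ℝ} (hq : 1 < q) (p : ℕ × (ℕ →₀ ℕ)) {a : ℕ}
    (ha : (consEquiv p).degree = a) :
    weight u q (consEquiv p)
      = u ^ a * q⁻¹ ^ (a ^ 2) / poch 1 q⁻¹ p.1 * weight u q p.2 := by
  obtain ⟨L, hL⟩ := exists_bound p.2
  have hL' := consEquiv_bound.2 hL
  rw [weight_eq u q hL', weight_eq u q hL,
    wt_succ hq L _ ((degree_eq_range hL').symm.trans ha), consEquiv_zero]
  simp only [consEquiv_succ]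

/-! ### Total weight of the partitions with a given number of parts -/

/-- The total weight of the multiplicity sequences with `a` parts that satisfy `P`. -/
noncomputable def partSum (u q : ℝ) (P : (ℕ →₀ ℕ) → Prop) (a : ℕ) : ℝ≥0∞ := by
  classical exact ∑' f : ℕ →₀ ℕ, if P f ∧ f.degree = a then ENNReal.ofReal (weight u q f) else 0

/-- Removing the first column turns partitions with `a` parts satisfying `P` into partitions with
`b ≤ a` parts satisfying `Q`, the `a - b` lost parts being those of size `1`. -/
lemma partSum_rec {u q : ℝ} (hq : 1 < q) (hu : 0 < u) {P Q : (ℕ →₀ ℕ) → Prop}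
    (hPQ : ∀ p, P (consEquiv p) ↔ Q p.2) (a : ℕ) :
    partSum u q P a = ∑ p ∈ antidiagonal a,
      ENNReal.ofReal (u ^ a * q⁻¹ ^ (a ^ 2) / poch 1 q⁻¹ p.1) * partSum u q Q p.2 := by
  classical
  have hc : ∀ k, 0 ≤ u ^ a * q⁻¹ ^ (a ^ 2) / poch 1 q⁻¹ k := fun k => by
    have := poch_pos (inv_pos.2 (by positivity)) (inv_lt_one_of_one_lt₀ hq) (le_refl (1 : ℝ)) k
    positivity
  have key : ∀ p : ℕ × (ℕ →₀ ℕ),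
      (if P (consEquiv p) ∧ (consEquiv p).degree = a
        then ENNReal.ofReal (weight u q (consEquiv p)) else 0)
      = ∑ s ∈ antidiagonal a, if p.1 = s.1 then
          ENNReal.ofReal (u ^ a * q⁻¹ ^ (a ^ 2) / poch 1 q⁻¹ s.1) *
            (if Q p.2 ∧ p.2.degree = s.2 then ENNReal.ofReal (weight u q p.2) else 0) else 0 := by
    intro p
    by_cases h : P (consEquiv p) ∧ (consEquiv p).degree = a
    · rw [if_pos h]
      have hd := h.2
      rw [degree_consEquiv] at hd
      rw [sum_eq_single (p.1, p.2.degree), if_pos rfl, if_pos ⟨(hPQ p).1 h.1, rfl⟩,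
        ← ENNReal.ofReal_mul (hc _), weight_consEquiv hq p h.2]
      · rintro ⟨s, t⟩ _ hst
        split_ifs with h1 h2
        · exact absurd (Prod.ext h1.symm h2.2.symm) hst
        · simp
        · rfl
      · intro hn
        exact absurd (mem_antidiagonal.2 hd) hn
    · rw [if_neg h, eq_comm]
      refine sum_eq_zero fun s hs => ?_
      split_ifs with h1 h2
      · refine absurd ⟨(hPQ p).2 h2.1, ?_⟩ h
        rw [degree_consEquiv, h1, h2.2]
        exact mem_antidiagonal.1 hs
      · simp
      · rfl
  rw [partSum, ← consEquiv.tsum_eq]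
  simp only [key]
  rw [Summable.tsum_finsetSum fun _ _ => ENNReal.summable]
  refine sum_congr rfl fun s _ => ?_
  rw [ENNReal.tsum_prod', tsum_eq_single s.1 fun k hk => by simp [hk]]
  simp only [if_true]
  rw [ENNReal.tsum_mul_left, partSum]

/-- The weight of the partitions with `a` parts, all of size at most `n`, is at most
`colWeight u q⁻¹ a`. -/
lemma partSum_bounded_le {u q : ℝ} (hq : 1 < q) (hu0 : 0 < u) (hu1 : u ≤ 1) (n : ℕ) : ∀ a,
    partSum u q (fun f => ∀ i, n ≤ i → f i = 0) a ≤ ENNReal.ofReal (colWeight u q⁻¹ a) := by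
  have hx0 : 0 < q⁻¹ := inv_pos.2 (by positivity)
  have hx1 := inv_lt_one_of_one_lt₀ hq
  induction n with
  | zero =>
    intro a
    rw [partSum, tsum_eq_single 0]
    · split_ifs with h
      · obtain rfl : a = 0 := by simpa [eq_comm] using h.2
        simp [weight, wt, expo, glOrder, colWeight, poch_zero]
      · exact zero_le
    · intro f hf
      rw [if_neg]
      rintro ⟨h, -⟩
      exact hf (Finsupp.ext fun i => h i (Nat.zero_le i))
  | succ n ih =>
    intro a
    have hc : ∀ k, 0 ≤ u ^ a * q⁻¹ ^ (a ^ 2) / poch 1 q⁻¹ k := fun k => by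
      have := poch_pos hx0 hx1 (le_refl (1 : ℝ)) k
      positivity
    rw [partSum_rec hq hu0 (Q := fun f => ∀ i, n ≤ i → f i = 0) (fun p => consEquiv_bound),
      ← colWeight_rec hx0 hx1 hu0 hu1 a,
      ENNReal.ofReal_sum_of_nonneg fun p _ =>
        mul_nonneg (hc _) (colWeight_pos hx0 hx1 hu0 hu1 _).le]
    refine sum_le_sum fun p _ => ?_
    rw [ENNReal.ofReal_mul (hc _)]
    gcongr
    exact ih _

lemma partSum_le {u q : ℝ} (hq : 1 < q) (hu0 : 0 < u) (hu1 : u ≤ 1) (a : ℕ) :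
    partSum u q (fun _ => True) a ≤ ENNReal.ofReal (colWeight u q⁻¹ a) := by
  classical
  rw [partSum, ENNReal.tsum_eq_iSup_sum]
  refine iSup_le fun s => ?_
  obtain ⟨n, hn⟩ : ∃ n, ∀ f ∈ s, ∀ i, n ≤ i → f i = 0 := by
    choose L hL using exists_bound
    exact ⟨s.sup L, fun f hf i hi => hL f i ((le_sup hf).trans hi)⟩
  refine le_trans ?_ (partSum_bounded_le hq hu0 hu1 n a)
  rw [partSum]
  refine le_trans (sum_le_sum fun f hf => ?_) (ENNReal.sum_le_tsum s)
  have := hn f hf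
  simp only [true_and]
  split_ifs with h1 h2 h2
  · exact le_rfl
  · exact absurd ⟨this, h1⟩ h2
  · exact zero_le
  · exact le_rfl

/-- Both `partSum` and `colWeight` satisfy the same triangular recursion, whose diagonal coefficient
`u^a q^(-a²)` is less than `1` for `a > 0`; so the finite values `partSum` are determined by the
value at `a = 0`. -/
lemma partSum_eq {u q : ℝ} (hq : 1 < q) (hu0 : 0 < u) (hu1 : u < 1) (a : ℕ) :
    partSum u q (fun _ => True) a = ENNReal.ofReal (colWeight u q⁻¹ a) := by
  classical
  have hx0 : 0 < q⁻¹ := inv_pos.2 (by positivity)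
  have hx1 := inv_lt_one_of_one_lt₀ hq
  have hfin : ∀ a, partSum u q (fun _ => True) a ≠ ∞ := fun a =>
    ne_top_of_le_ne_top ENNReal.ofReal_ne_top (partSum_le hq hu0 hu1.le a)
  induction a using Nat.strong_induction_on with
  | _ a ih =>
    rcases Nat.eq_zero_or_pos a with rfl | ha
    · refine le_antisymm (partSum_le hq hu0 hu1.le 0) ?_
      rw [partSum]
      refine le_trans ?_ (ENNReal.le_tsum 0)
      simp [weight, wt, expo, glOrder, colWeight, poch_zero]
    · set D : ℕ → ℝ := fun b =>
        colWeight u q⁻¹ b - (partSum u q (fun _ => True) b).toReal with hD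
      have hc : ∀ k, 0 ≤ u ^ a * q⁻¹ ^ (a ^ 2) / poch 1 q⁻¹ k := fun k => by
        have := poch_pos hx0 hx1 (le_refl (1 : ℝ)) k
        positivity
      have hrec : (partSum u q (fun _ => True) a).toReal = ∑ p ∈ antidiagonal a,
          u ^ a * q⁻¹ ^ (a ^ 2) / poch 1 q⁻¹ p.1 *
            (partSum u q (fun _ => True) p.2).toReal := by
        conv_lhs => rw [partSum_rec hq hu0 (Q := fun _ => True) (fun _ => Iff.rfl) a]
        rw [ENNReal.toReal_sum fun p _ => ENNReal.mul_ne_top ENNReal.ofReal_ne_top (hfin _)]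
        refine sum_congr rfl fun p _ => ?_
        rw [ENNReal.toReal_mul, ENNReal.toReal_ofReal (hc _)]
      have hDrec : D a = u ^ a * q⁻¹ ^ (a ^ 2) * D a := by
        have h1 : D a = ∑ p ∈ antidiagonal a,
            u ^ a * q⁻¹ ^ (a ^ 2) / poch 1 q⁻¹ p.1 * D p.2 := by
          simp only [hD, mul_sub, sum_sub_distrib]
          rw [colWeight_rec hx0 hx1 hu0 hu1.le, ← hrec]
        rw [sum_eq_single (0, a)] at h1
        · simpa [poch_zero] using h1
        · rintro ⟨k, b⟩ hkb hne
          have hkb' := mem_antidiagonal.1 hkb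
          have hlt : b < a := by
            rcases Nat.eq_zero_or_pos k with rfl | hk
            · exact absurd (by simpa using hkb') hne
            · simp only at hkb'
              lia
          simp [hD, ih b hlt, ENNReal.toReal_ofReal (colWeight_pos hx0 hx1 hu0 hu1.le b).le]
        · intro h
          exact absurd (mem_antidiagonal.2 (zero_add a)) h
      have hlt : u ^ a * q⁻¹ ^ (a ^ 2) < 1 :=
        mul_lt_one_of_nonneg_of_lt_one_left (by positivity) (pow_lt_one₀ hu0.le hu1 ha.ne')
          (pow_le_one₀ hx0.le hx1.le)
      have hD0 : D a = 0 := by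
        by_contra h
        have := mul_right_cancel₀ h ((one_mul _).trans hDrec)
        linarith
      rw [← ENNReal.ofReal_toReal (hfin a)]
      congr 1
      simp only [hD] at hD0
      linarith

/-- The generating function of all partitions: `∑_λ weight λ = 1 / (u/q; 1/q)_∞`. -/
lemma tsum_weight {u q : ℝ} (hq : 1 < q) (hu0 : 0 < u) (hu1 : u < 1) :
    ∑' f : ℕ →₀ ℕ, ENNReal.ofReal (weight u q f) = ENNReal.ofReal (1 / pochInf u q⁻¹) := by
  classical
  have hx0 : 0 < q⁻¹ := inv_pos.2 (by positivity)
  have hx1 := inv_lt_one_of_one_lt₀ hq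
  have hs := colWeight_hasSum hx0 hx1 hu0 hu1
  rw [← hs.tsum_eq, ENNReal.ofReal_tsum_of_nonneg
    (fun a => (colWeight_pos hx0 hx1 hu0 hu1.le a).le) hs.summable]
  simp only [← partSum_eq hq hu0 hu1, partSum]
  rw [ENNReal.tsum_comm]
  refine tsum_congr fun f => ?_
  simp

lemma hasSum_weight {u q : ℝ} (hq : 1 < q) (hu0 : 0 < u) (hu1 : u < 1) :
    HasSum (weight u q) (1 / pochInf u q⁻¹) := by
  have hx0 : 0 < q⁻¹ := inv_pos.2 (by positivity)
  have hP := pochInf_pos hx0 (inv_lt_one_of_one_lt₀ hq) hu1.le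
  have h := tsum_weight hq hu0 hu1
  have h2 := ENNReal.hasSum_toReal (f := fun f => ENNReal.ofReal (weight u q f))
    (by rw [h]; exact ENNReal.ofReal_ne_top)
  have h3 : ∀ f, (ENNReal.ofReal (weight u q f)).toReal = weight u q f := fun f =>
    ENNReal.toReal_ofReal (weight_pos hq hu0 f).le
  rw [← ENNReal.tsum_toReal_eq (fun _ => ENNReal.ofReal_ne_top), h,
    ENNReal.toReal_ofReal (by positivity)] at h2
  simpa only [h3] using h2

/-! ### Partitions as multiplicity sequences -/

/-- The multiplicity sequence of a partition: its `i`-th entry is the multiplicity of the part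
`i + 1`. -/
noncomputable def multSeq (lam : Σ n : ℕ, Nat.Partition n) : ℕ →₀ ℕ :=
  Finsupp.comapDomain Nat.succ (Multiset.toFinsupp lam.2.parts) Nat.succ_injective.injOn

lemma multSeq_apply (lam : Σ n : ℕ, Nat.Partition n) (i : ℕ) :
    multSeq lam i = lam.2.parts.count (i + 1) := by
  simp [multSeq]

lemma count_zero_parts {n : ℕ} (p : Nat.Partition n) : p.parts.count 0 = 0 :=
  Multiset.count_eq_zero_of_notMem fun h => (p.parts_pos h).ne' rfl

lemma multSeq_injective : Function.Injective multSeq := by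
  rintro ⟨n, p⟩ ⟨n', p'⟩ h
  have hparts : p.parts = p'.parts := by
    ext i
    cases i with
    | zero => rw [count_zero_parts, count_zero_parts]
    | succ i =>
      have := DFunLike.congr_fun h i
      rwa [multSeq_apply, multSeq_apply] at this
  obtain rfl : n = n' := by rw [← p.parts_sum, ← p'.parts_sum, hparts]
  rw [Nat.Partition.ext hparts]

lemma multSeq_surjective : Function.Surjective multSeq := by
  intro f
  refine ⟨⟨_, ⟨(Finsupp.toMultiset f).map Nat.succ, ?_, rfl⟩⟩, ?_⟩
  · intro i hi
    obtain ⟨j, -, rfl⟩ := Multiset.mem_map.1 hi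
    exact Nat.succ_pos j
  · ext i
    rw [multSeq_apply]
    exact (Multiset.count_map_eq_count' Nat.succ _ Nat.succ_injective i).trans
      (Finsupp.count_toMultiset f i)

lemma multSeq_bound (lam : Σ n : ℕ, Nat.Partition n) (i : ℕ) (hi : lam.1 ≤ i) :
    multSeq lam i = 0 := by
  rw [multSeq_apply]
  refine Multiset.count_eq_zero_of_notMem fun h => ?_
  have := Multiset.le_sum_of_mem h
  rw [lam.2.parts_sum] at this
  lia

lemma size_eq (lam : Σ n : ℕ, Nat.Partition n) :
    ∑ i ∈ range lam.1, (i + 1) * lam.2.parts.count (i + 1) = lam.1 := by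
  conv_rhs => rw [← lam.2.parts_sum]
  rw [Finset.sum_multiset_count_of_subset lam.2.parts (range (lam.1 + 1)), sum_range_succ']
  · simp [mul_comm]
  · intro i hi
    have := Multiset.le_sum_of_mem (Multiset.mem_toFinset.1 hi)
    rw [lam.2.parts_sum] at this
    simpa [Nat.lt_succ_iff] using this

/-- `M_{(u,q)}` is the weight of the multiplicity sequence times `(u/q; 1/q)_∞`. The terms of index `0`
in the definition of `measureM` vanish because `0` is not a part. -/
lemma measureM_eq (u q : ℝ) (lam : Σ n : ℕ, Nat.Partition n) :
    measureM u q lam = pochInf u q⁻¹ * weight u q (multSeq lam) := by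
  have hP : ∏' r : ℕ, (1 - u / q ^ (r + 1)) = pochInf u q⁻¹ := by
    simp only [pochInf, inv_pow, div_eq_mul_inv]
  have h0 := count_zero_parts lam.2
  rw [weight_eq u q (multSeq_bound lam), measureM, hP, wt]
  simp only [multSeq_apply, size_eq, expo]
  rw [sum_range_succ' _ lam.1, sum_range_succ' _ lam.1, prod_range_succ']
  simp only [sum_range_succ' _ (_ : ℕ), h0]
  simp [glOrder, mul_div_assoc]

end

theorem statement3 (u q : ℝ) (hq : 1 < q) (hu0 : 0 < u) (hu1 : u < 1) :
    (∀ lam : Σ n : ℕ, Nat.Partition n, 0 < measureM u q lam) ∧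
    HasSum (measureM u q) 1 := by
  have hP := pochInf_pos (inv_pos.2 (by positivity)) (inv_lt_one_of_one_lt₀ hq) hu1.le
  refine ⟨fun lam => ?_, ?_⟩
  · rw [measureM_eq]
    exact mul_pos hP (weight_pos hq hu0 _)
  · have h := (hasSum_weight hq hu0 hu1).mul_left (pochInf u q⁻¹)
    rw [mul_one_div_cancel hP.ne'] at h
    have h2 := (Equiv.ofBijective multSeq ⟨multSeq_injective, multSeq_surjective⟩).hasSum_iff.2 h
    exact h2.congr_fun fun lam => measureM_eq u q lam
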